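/- For the regular circular helical polygon, for every k ∈ ℤ the vector T_k ∧₋ T_{k+1} is space-like: |T_k ∧₋ T_{k+1}|₀² = sinh²(ρ₀) > 0, where ρ₀ = 2 arcsinh(a sin(π/M)). -/

import Mathlib

noncomputable section

open Real

/-- The Minkowski pseudo-scalar product on ℝ^{1,2} = ℝ³. -/
def mdot (a b : Fin 3 → ℝ) : ℝ := -(a 0 * b 0) + a 1 * b 1 + a 2 * b 2

/-- The Minkowski cross product on ℝ^{1,2} = ℝ³. -/
def mcross (a b : Fin 3 → ℝ) : Fin 3 → ℝ :=
  ![-(a 1 * b 2 - a 2 * b 1), a 2 * b 0 - a 0 * b 2, a 0 * b 1 - a 1 * b 0]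

/-- Tangent vectors of the regular circular helical polygon with `M` sides
and torsion parameter `b` (with `a = √(b² − 1)`). -/
def chpT (M : ℕ) (b : ℝ) (k : ℤ) : Fin 3 → ℝ :=
  ![b, Real.sqrt (b ^ 2 - 1) * Real.cos (2 * π * k / M),
    Real.sqrt (b ^ 2 - 1) * Real.sin (2 * π * k / M)]

/-!
Each `T_k` lies on the two-sheeted hyperboloid `v ∘₋ v = -1`, and the half-angle formula gives
`T_j ∘₋ T_k = -(1 + 2 a² sin² (π (k - j) / M)) = -cosh ρ` with
`ρ = 2 arsinh (a sin (π (k - j) / M))`. Hence the Lorentzian Lagrange identity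
`|u ∧₋ v|₀² = (u ∘₋ v)² - |u|₀² |v|₀²` yields `|T_j ∧₋ T_k|₀² = cosh² ρ - 1 = sinh² ρ`.
-/

theorem cosh_two_mul_arsinh (x : ℝ) : cosh (2 * arsinh x) = 1 + 2 * x ^ 2 := by
  rw [cosh_two_mul, cosh_sq, sinh_arsinh]
  ring

theorem mdot_comm (u v : Fin 3 → ℝ) : mdot u v = mdot v u := by
  simp only [mdot, mul_comm]

theorem mdot_mcross_mcross (u v w z : Fin 3 → ℝ) :
    mdot (mcross u v) (mcross w z) = mdot u z * mdot v w - mdot u w * mdot v z := by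
  simp only [mdot, mcross, Matrix.cons_val]
  ring

theorem mdot_mcross_self_eq_sinh_sq {u v : Fin 3 → ℝ} {ρ : ℝ} (hu : mdot u u = -1)
    (hv : mdot v v = -1) (huv : mdot u v = -cosh ρ) :
    mdot (mcross u v) (mcross u v) = sinh ρ ^ 2 := by
  rw [mdot_mcross_mcross, mdot_comm v u, hu, hv, huv, sinh_sq]
  ring

theorem mdot_chpT (M : ℕ) {b : ℝ} (hb : 1 ≤ |b|) (j k : ℤ) :
    mdot (chpT M b j) (chpT M b k) =
      -cosh (2 * arsinh (√(b ^ 2 - 1) * sin (π * (k - j) / M))) := by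
  have ha : √(b ^ 2 - 1) ^ 2 = b ^ 2 - 1 :=
    sq_sqrt (sub_nonneg.mpr ((one_le_sq_iff_one_le_abs b).mpr hb))
  have hcos : cos (2 * π * k / M) * cos (2 * π * j / M) +
      sin (2 * π * k / M) * sin (2 * π * j / M) = 1 - 2 * sin (π * (k - j) / M) ^ 2 := by
    rw [← cos_sub, ← cos_two_mul_eq_one_sub]
    congr 1
    ring
  rw [cosh_two_mul_arsinh]
  simp only [mdot, chpT, Matrix.cons_val]
  linear_combination √(b ^ 2 - 1) ^ 2 * hcos + ha

theorem mdot_chpT_self (M : ℕ) {b : ℝ} (hb : 1 ≤ |b|) (k : ℤ) :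
    mdot (chpT M b k) (chpT M b k) = -1 := by
  simp [mdot_chpT M hb]

theorem mdot_mcross_chpT_eq_sinh_sq (M : ℕ) {b : ℝ} (hb : 1 ≤ |b|) (j k : ℤ) :
    mdot (mcross (chpT M b j) (chpT M b k)) (mcross (chpT M b j) (chpT M b k)) =
      sinh (2 * arsinh (√(b ^ 2 - 1) * sin (π * (k - j) / M))) ^ 2 :=
  mdot_mcross_self_eq_sinh_sq (mdot_chpT_self M hb j) (mdot_chpT_self M hb k) (mdot_chpT M hb j k)

theorem sin_pi_div_natCast_pos {n : ℕ} (hn : 2 ≤ n) : 0 < sin (π / n) :=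
  sin_pos_of_pos_of_lt_pi (by positivity) (div_lt_self pi_pos (by exact_mod_cast hn))

theorem chp_binormal_spacelike_general (M : ℕ) (hM : 2 ≤ M) (b : ℝ) (hb : 1 < |b|) :
    ∀ k : ℤ,
      mdot (mcross (chpT M b k) (chpT M b (k + 1))) (mcross (chpT M b k) (chpT M b (k + 1))) =
        (Real.sinh (2 * Real.arsinh (Real.sqrt (b ^ 2 - 1) * Real.sin (π / M)))) ^ 2 ∧
      0 < mdot (mcross (chpT M b k) (chpT M b (k + 1)))
            (mcross (chpT M b k) (chpT M b (k + 1))) := by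
  intro k
  have norm_sq_eq := mdot_mcross_chpT_eq_sinh_sq M hb.le k (k + 1)
  rw [Int.cast_add, Int.cast_one, add_sub_cancel_left, mul_one] at norm_sq_eq
  have ha : 0 < √(b ^ 2 - 1) := sqrt_pos.mpr (sub_pos.mpr ((one_lt_sq_iff_one_lt_abs b).mpr hb))
  have hρ : 0 < 2 * arsinh (√(b ^ 2 - 1) * sin (π / M)) :=
    mul_pos two_pos (arsinh_pos_iff.mpr (mul_pos ha (sin_pi_div_natCast_pos hM)))
  exact ⟨norm_sq_eq, norm_sq_eq ▸ pow_pos (sinh_pos_iff.mpr hρ) 2⟩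

/-- For the regular circular helical polygon, `T_k ∧₋ T_{k+1}` is space-like:
`|T_k ∧₋ T_{k+1}|₀² = sinh²(ρ₀) > 0`, with `ρ₀ = 2 arcsinh(a sin(π/M))`. -/
theorem chp_binormal_spacelike (M : ℕ) (hM : 3 ≤ M) (b : ℝ) (hb : 1 < b) :
    ∀ k : ℤ,
      mdot (mcross (chpT M b k) (chpT M b (k + 1))) (mcross (chpT M b k) (chpT M b (k + 1))) =
        (Real.sinh (2 * Real.arsinh (Real.sqrt (b ^ 2 - 1) * Real.sin (π / M)))) ^ 2 ∧
      0 < mdot (mcross (chpT M b k) (chpT M b (k + 1)))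
            (mcross (chpT M b k) (chpT M b (k + 1))) :=
  chp_binormal_spacelike_general M (Nat.le_of_succ_le hM) b (hb.trans_le (le_abs_self b))
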